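/- Fix κ > 0, N ≥ 2, intrinsic frequencies ω_1,…,ω_N ∈ ℝ, and 0 < δ < 1. Then the set of initial data (θ_1^0,…,θ_N^0) ∈ ℝ^N such that the solution (θ_i)_{i=1}^N of the prototypical Winfree model satisfies R(t) < 1 − δ for all t ≥ 0 has N-dimensional Lebesgue measure zero. -/

import Mathlib

/-!
The idea is that, away from a countable set, the Winfree flow strictly expands volume as long as
`R ≤ 1 - δ`. Writing the system as `x' = F(x)`, one has
`div F = κ N R (1 - R) + (κ / N) ∑ sin² θᵢ ≥ κ N δ R`. The set `A` of exceptional initial data is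
forward invariant and `2π`-periodic in each phase, so the flow maps `A`, viewed in the torus, into
itself injectively. Finite volume then forces `∫_A R = 0`, hence `R = 0` almost everywhere on `A`;
but `R = 0` only where all phases equal `π` modulo `2π`, a countable set.

Neither the differentiability of the flow nor its global existence is needed. Since `F` and `DF · F`
are Lipschitz, the time-`h` map differs from the Euler step `E_h(x) = x + h F(x)` by a map with
Lipschitz constant `C h²` (`exists_euler_bound`). Such a map extends to all of `ℝ^N`, which gives a
continuous self-map `Ψ` of the closure `B` of `A`, a measurable set (`exists_flow_map`). With
`S = B ∩ D`, where `D` is a fundamental cell of `(2πℤ)^N`: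

* `vol (Ψ S) ≤ vol S`, as `Ψ` is injective modulo the lattice (`volume_le_of_inequivalent`);
* `vol (E_h S) ≤ (1 + 2 C h²)^N vol (Ψ S)`, as `Ψ x ↦ E_h x` is Lipschitz (`volume_image_le`);
* `vol (E_h S) = ∫_S |det DE_h| ≥ ∫_S (1 + h κ N δ R - 8 N κ² h²)`, because `DE_h` is a diagonal
  matrix plus a nonnegative rank-one matrix (`le_det_eulerJac`).

Together these give `κ N δ ∫_S R = O(h)` (`integral_ordR_le`), and `h → 0` concludes.
-/

open MeasureTheory Filter

/-- The order parameter `R(t) = (1/N) ∑ⱼ (1 + cos θⱼ(t))` of the prototypical Winfree model. -/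
noncomputable def orderParam (N : ℕ) (θ : Fin N → ℝ → ℝ) (t : ℝ) : ℝ :=
  (N : ℝ)⁻¹ * ∑ j, (1 + Real.cos (θ j t))

/-- `θ` is the solution of the prototypical Winfree model with frequencies `ω`,
coupling strength `κ` and initial data `θ0`. -/
def IsWinfreeSol (N : ℕ) (ω : Fin N → ℝ) (κ : ℝ) (θ0 : Fin N → ℝ)
    (θ : Fin N → ℝ → ℝ) : Prop :=
  (∀ i, θ i 0 = θ0 i) ∧
  ∀ i, ∀ t : ℝ, 0 ≤ t →
    HasDerivAt (θ i)
      (ω i - κ / (N : ℝ) * (∑ j, (1 + Real.cos (θ j t))) * Real.sin (θ i t)) t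

/-- `sup_{t ≥ 0} f(t) - inf_{t ≥ 0} f(t) < 2π` (in particular `f` is bounded on `[0,∞)`). -/
def OscLt2Pi (f : ℝ → ℝ) : Prop :=
  BddAbove (f '' Set.Ici 0) ∧ BddBelow (f '' Set.Ici 0) ∧
    sSup (f '' Set.Ici 0) - sInf (f '' Set.Ici 0) < 2 * Real.pi

/-! ### Bounded Lipschitz functions -/

/-- A bounded, Lipschitz real function on `ℝ^N`, with one constant serving as the bound and as the
Lipschitz constant (for the sup norm). Such functions form an algebra containing `sin (x i)` and
`cos (x i)`, hence the components of the vector field and of its derivative along itself. -/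
def BddLip {N : ℕ} (f : (Fin N → ℝ) → ℝ) : Prop :=
  ∃ C : ℝ, ∀ x, |f x| ≤ C ∧ ∀ y, |f x - f y| ≤ C * ‖x - y‖

namespace BddLip

variable {N : ℕ} {f g : (Fin N → ℝ) → ℝ}

lemma const (c : ℝ) : BddLip (fun _ : Fin N → ℝ => c) :=
  ⟨|c|, fun x => ⟨le_rfl, fun y => by simp; positivity⟩⟩

lemma add (hf : BddLip f) (hg : BddLip g) : BddLip (fun x => f x + g x) := by
  obtain ⟨C, hC⟩ := hf
  obtain ⟨D, hD⟩ := hg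
  refine ⟨C + D, fun x => ⟨(abs_add_le _ _).trans (add_le_add (hC x).1 (hD x).1), fun y => ?_⟩⟩
  calc |f x + g x - (f y + g y)| = |(f x - f y) + (g x - g y)| := by ring_nf
    _ ≤ |f x - f y| + |g x - g y| := abs_add_le _ _
    _ ≤ (C + D) * ‖x - y‖ := by linarith [(hC x).2 y, (hD x).2 y]

lemma mul (hf : BddLip f) (hg : BddLip g) : BddLip (fun x => f x * g x) := by
  obtain ⟨C, hC⟩ := hf
  obtain ⟨D, hD⟩ := hg
  have hC0 : 0 ≤ C := (abs_nonneg _).trans (hC 0).1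
  have hD0 : 0 ≤ D := (abs_nonneg _).trans (hD 0).1
  refine ⟨2 * (C * D), fun x => ⟨?_, fun y => ?_⟩⟩
  · rw [abs_mul]
    nlinarith [mul_le_mul (hC x).1 (hD x).1 (abs_nonneg _) hC0, mul_nonneg hC0 hD0]
  · calc |f x * g x - f y * g y| = |f x * (g x - g y) + (f x - f y) * g y| := by ring_nf
      _ ≤ |f x| * |g x - g y| + |f x - f y| * |g y| := by
        rw [← abs_mul, ← abs_mul]; exact abs_add_le _ _
      _ ≤ C * (D * ‖x - y‖) + (C * ‖x - y‖) * D :=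
        add_le_add (mul_le_mul (hC x).1 ((hD x).2 y) (abs_nonneg _) hC0)
          (mul_le_mul ((hC x).2 y) (hD y).1 (abs_nonneg _) (by positivity))
      _ = 2 * (C * D) * ‖x - y‖ := by ring

lemma sum {ι : Type*} (s : Finset ι) {F : ι → (Fin N → ℝ) → ℝ} (h : ∀ i, BddLip (F i)) :
    BddLip (fun x => ∑ i ∈ s, F i x) := by
  classical
  induction s using Finset.induction_on with
  | empty => simpa using const (N := N) 0
  | insert a s ha ih => simpa [Finset.sum_insert ha] using (h a).add ih

lemma sin (i : Fin N) : BddLip (fun x : Fin N → ℝ => Real.sin (x i)) := by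
  refine ⟨1, fun x => ⟨Real.abs_sin_le_one _, fun y => ?_⟩⟩
  have h := Real.lipschitzWith_sin.dist_le_mul (x i) (y i)
  have h' := norm_le_pi_norm (x - y) i
  simp only [Real.dist_eq, Pi.sub_apply, Real.norm_eq_abs, NNReal.coe_one] at h h'
  linarith

lemma cos (i : Fin N) : BddLip (fun x : Fin N → ℝ => Real.cos (x i)) := by
  refine ⟨1, fun x => ⟨Real.abs_cos_le_one _, fun y => ?_⟩⟩
  have h := Real.lipschitzWith_cos.dist_le_mul (x i) (y i)
  have h' := norm_le_pi_norm (x - y) i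
  simp only [Real.dist_eq, Pi.sub_apply, Real.norm_eq_abs, NNReal.coe_one] at h h'
  linarith

/-- A vector field all of whose components are bounded and Lipschitz is Lipschitz. -/
lemma pi_lipschitz {F : (Fin N → ℝ) → Fin N → ℝ} (h : ∀ i, BddLip (fun x => F x i)) :
    ∃ C : ℝ, 0 ≤ C ∧ ∀ x y, ‖F x - F y‖ ≤ C * ‖x - y‖ := by
  choose C hC using h
  have h0 : ∀ i, 0 ≤ C i := fun i => (abs_nonneg _).trans (hC i 0).1
  refine ⟨∑ i, C i, Finset.sum_nonneg fun i _ => h0 i, fun x y => ?_⟩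
  refine (pi_norm_le_iff_of_nonneg (mul_nonneg (Finset.sum_nonneg fun i _ => h0 i)
    (norm_nonneg _))).2 fun i => ((hC i x).2 y).trans ?_
  exact mul_le_mul_of_nonneg_right (Finset.single_le_sum (fun j _ => h0 j) (Finset.mem_univ i))
    (norm_nonneg _)

end BddLip

/-! ### The Winfree vector field and its trajectories -/

/-- The Winfree vector field on `ℝ^N`. -/
noncomputable def wField (N : ℕ) (ω : Fin N → ℝ) (κ : ℝ) (x : Fin N → ℝ) (i : Fin N) : ℝ :=
  ω i - κ / (N : ℝ) * (∑ j, (1 + Real.cos (x j))) * Real.sin (x i)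

/-- The second derivative `DF(x) F(x)` of a trajectory of `F = wField N ω κ` passing
through `x`. -/
noncomputable def wAccel (N : ℕ) (ω : Fin N → ℝ) (κ : ℝ) (x : Fin N → ℝ) (i : Fin N) : ℝ :=
  -(κ / (N : ℝ) * (∑ j, -(Real.sin (x j) * wField N ω κ x j)) * Real.sin (x i)
    + κ / (N : ℝ) * (∑ j, (1 + Real.cos (x j))) * (Real.cos (x i) * wField N ω κ x i))

/-- The order parameter as a function on phase space. -/
noncomputable def ordR (N : ℕ) (x : Fin N → ℝ) : ℝ := (N : ℝ)⁻¹ * ∑ j, (1 + Real.cos (x j))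

lemma ordR_nonneg {N : ℕ} (x : Fin N → ℝ) : 0 ≤ ordR N x :=
  mul_nonneg (by positivity)
    (Finset.sum_nonneg fun j _ => by linarith [Real.neg_one_le_cos (x j)])

lemma ordR_le_two {N : ℕ} (hN : N ≠ 0) (x : Fin N → ℝ) : ordR N x ≤ 2 := by
  have hN' : (0:ℝ) < N := by positivity
  have : ∑ j, (1 + Real.cos (x j)) ≤ ∑ _j : Fin N, (2:ℝ) :=
    Finset.sum_le_sum fun j _ => by linarith [Real.cos_le_one (x j)]
  simp at this
  rw [ordR, inv_mul_le_iff₀ hN']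
  linarith

lemma continuous_ordR (N : ℕ) : Continuous (ordR N) := by
  unfold ordR
  fun_prop

lemma bddLip_wField (N : ℕ) (ω : Fin N → ℝ) (κ : ℝ) (i : Fin N) :
    BddLip (fun x => wField N ω κ x i) := by
  have h := (BddLip.const (ω i)).add ((BddLip.const (-(κ / (N : ℝ)))).mul
    ((BddLip.sum Finset.univ fun j : Fin N => (BddLip.const 1).add (BddLip.cos j)).mul
      (BddLip.sin i)))
  convert h using 2
  unfold wField
  ring

lemma bddLip_wAccel (N : ℕ) (ω : Fin N → ℝ) (κ : ℝ) (i : Fin N) :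
    BddLip (fun x => wAccel N ω κ x i) := by
  have hS := BddLip.sum Finset.univ fun j : Fin N => (BddLip.const 1).add (BddLip.cos j)
  have hT := BddLip.sum Finset.univ fun j : Fin N =>
    (BddLip.const (-1)).mul ((BddLip.sin j).mul (bddLip_wField N ω κ j))
  have h := ((BddLip.const (-(κ / (N : ℝ)))).mul (hT.mul (BddLip.sin i))).add
    ((BddLip.const (-(κ / (N : ℝ)))).mul (hS.mul ((BddLip.cos i).mul (bddLip_wField N ω κ i))))
  convert h using 2
  unfold wAccel
  simp only [neg_one_mul]
  ring

lemma hasDerivAt_wField_comp {N : ℕ} {ω : Fin N → ℝ} {κ : ℝ} {X : ℝ → Fin N → ℝ} {t : ℝ}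
    (h : HasDerivAt X (wField N ω κ (X t)) t) :
    HasDerivAt (fun s => wField N ω κ (X s)) (wAccel N ω κ (X t)) t := by
  rw [hasDerivAt_pi] at h ⊢
  intro i
  have hS : HasDerivAt (fun s => ∑ j, (1 + Real.cos (X s j)))
      (∑ j, -(Real.sin (X t j) * wField N ω κ (X t) j)) t := by
    refine HasDerivAt.fun_sum fun j _ => ?_
    simpa using ((h j).cos).const_add 1
  exact (((hS.const_mul (κ / (N : ℝ))).mul (h i).sin).const_sub (ω i))

/-- The time-`h` map differs from the Euler step `x + h F(x)` by a map whose Lipschitz constant is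
`O(h²)`, uniformly over phase space. The same constant bounds the Lipschitz constant of `F`. -/
lemma exists_euler_bound (N : ℕ) (ω : Fin N → ℝ) (κ : ℝ) :
    ∃ C : ℝ, 0 ≤ C ∧ (∀ x y, ‖wField N ω κ x - wField N ω κ y‖ ≤ C * ‖x - y‖) ∧
      ∀ X Y : ℝ → Fin N → ℝ, (∀ t, 0 ≤ t → HasDerivAt X (wField N ω κ (X t)) t) →
        (∀ t, 0 ≤ t → HasDerivAt Y (wField N ω κ (Y t)) t) → ∀ h, 0 ≤ h → h ≤ 1 →
        ‖(X h - Y h) - (X 0 - Y 0) - h • (wField N ω κ (X 0) - wField N ω κ (Y 0))‖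
          ≤ C * h ^ 2 * ‖X 0 - Y 0‖ := by
  obtain ⟨L, hL0, hL⟩ := BddLip.pi_lipschitz (bddLip_wField N ω κ)
  obtain ⟨M, hM0, hM⟩ := BddLip.pi_lipschitz (bddLip_wAccel N ω κ)
  refine ⟨L + M * Real.exp L, by positivity, fun x y => (hL x y).trans ?_, ?_⟩
  · gcongr
    have := mul_nonneg hM0 (Real.exp_pos L).le
    linarith
  intro X Y hX hY h h0 h1
  have hlip : ∀ t : ℝ, LipschitzWith L.toNNReal ((fun _ : ℝ => wField N ω κ) t) := fun _ =>
    LipschitzWith.of_dist_le_mul fun x y => by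
      simpa [dist_eq_norm, Real.coe_toNNReal L hL0] using hL x y
  have hgron : ∀ t ∈ Set.Icc (0:ℝ) 1, ‖X t - Y t‖ ≤ Real.exp L * ‖X 0 - Y 0‖ := by
    intro t ht
    have := dist_le_of_trajectories_ODE (a := 0) (b := 1) hlip
      (fun s hs => (hX s hs.1).continuousAt.continuousWithinAt)
      (fun s hs => (hX s hs.1).hasDerivWithinAt)
      (fun s hs => (hY s hs.1).continuousAt.continuousWithinAt)
      (fun s hs => (hY s hs.1).hasDerivWithinAt) le_rfl t ht
    rw [dist_eq_norm, dist_eq_norm, mul_comm] at this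
    refine this.trans ?_
    gcongr
    rw [Real.coe_toNNReal L hL0, sub_zero]
    nlinarith [ht.1, ht.2]
  set K := M * (Real.exp L * ‖X 0 - Y 0‖) with hK
  have hK0 : 0 ≤ K := by positivity
  have hv : ∀ t ∈ Set.Icc (0:ℝ) 1, ‖(wField N ω κ (X t) - wField N ω κ (Y t)) -
      (wField N ω κ (X 0) - wField N ω κ (Y 0))‖ ≤ K * (t - 0) :=
    norm_image_sub_le_of_norm_deriv_le_segment'
      (f := fun t => wField N ω κ (X t) - wField N ω κ (Y t))
      (fun t ht => ((hasDerivAt_wField_comp (hX t ht.1)).sub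
        (hasDerivAt_wField_comp (hY t ht.1))).hasDerivWithinAt)
      (fun t ht => (hM _ _).trans
        (mul_le_mul_of_nonneg_left (hgron t ⟨ht.1, ht.2.le⟩) hM0))
  have hu := norm_image_sub_le_of_norm_deriv_le_segment' (a := 0) (b := h) (C := K * h)
      (f := fun t => (X t - Y t) - t • (wField N ω κ (X 0) - wField N ω κ (Y 0)))
      (fun t ht => (((hX t ht.1).sub (hY t ht.1)).sub
        ((hasDerivAt_id t).smul_const _)).hasDerivWithinAt)
      (fun t ht => by
        have := hv t ⟨ht.1, ht.2.le.trans h1⟩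
        simp only [one_smul]
        refine this.trans ?_
        rw [sub_zero]
        exact mul_le_mul_of_nonneg_left ht.2.le hK0) h ⟨h0, le_rfl⟩
  have e : (X h - Y h) - (X 0 - Y 0) - h • (wField N ω κ (X 0) - wField N ω κ (Y 0)) =
      (X h - Y h - h • (wField N ω κ (X 0) - wField N ω κ (Y 0))) -
        (X 0 - Y 0 - (0:ℝ) • (wField N ω κ (X 0) - wField N ω κ (Y 0))) := by
    rw [zero_smul]; abel
  rw [e]
  refine hu.trans ?_
  rw [hK]
  have : 0 ≤ L * h ^ 2 * ‖X 0 - Y 0‖ := by positivity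
  nlinarith

/-! ### The Jacobian of the Euler step -/

/-- The Jacobian matrix of the Euler step `x ↦ x + h F(x)`: a diagonal matrix plus
a rank-one positive semidefinite one. -/
noncomputable def eulerJac (N : ℕ) (κ h : ℝ) (x : Fin N → ℝ) : Matrix (Fin N) (Fin N) ℝ :=
  Matrix.of fun i j => (if i = j then 1 - h * (κ * ordR N x * Real.cos (x i)) else 0)
    + h * (κ / N) * Real.sin (x i) * Real.sin (x j)

lemma hasFDerivAt_euler (N : ℕ) (ω : Fin N → ℝ) (κ h : ℝ) (x : Fin N → ℝ) :
    HasFDerivAt (fun y => y + h • wField N ω κ y)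
      (Matrix.toLin' (eulerJac N κ h x)).toContinuousLinearMap x := by
  rw [hasFDerivAt_pi']
  intro i
  have hp : ∀ j : Fin N, HasFDerivAt (fun y : Fin N → ℝ => y j)
      (ContinuousLinearMap.proj (R := ℝ) (φ := fun _ : Fin N => ℝ) j) x := fun j =>
    hasFDerivAt_apply j x
  have hS := HasFDerivAt.fun_sum (u := Finset.univ) fun (j : Fin N) _ => ((hp j).cos).const_add 1
  have := (hp i).add ((((hS.const_mul (κ / (N : ℝ))).mul (hp i).sin).const_sub (ω i)).const_mul h)
  refine this.congr_fderiv ?_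
  ext v
  simp [eulerJac, ordR, Matrix.mulVec, dotProduct, add_mul, Finset.sum_add_distrib, ite_mul,
    Finset.mul_sum]
  rw [Finset.sum_congr rfl fun j _ =>
    show h * (Real.sin (x i) * (κ / N * (Real.sin (x j) * v j))) =
      h * (κ / N) * Real.sin (x i) * Real.sin (x j) * v j by ring]
  ring

/-- First-order lower bound for the Jacobian determinant of the Euler step where `R ≤ 1 - δ`. -/
lemma le_det_eulerJac {N : ℕ} (hN : N ≠ 0) {κ δ h : ℝ} (hκ : 0 < κ) (hh : 0 ≤ h)
    (hs : 4 * (h * κ) ≤ 1) {x : Fin N → ℝ} (hx : ordR N x ≤ 1 - δ) :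
    1 + h * (κ * N * δ) * ordR N x - 8 * N * κ ^ 2 * h ^ 2 ≤ (eulerJac N κ h x).det := by
  have hN' : (0:ℝ) < N := by positivity
  have hR0 := ordR_nonneg x
  have hR2 := ordR_le_two hN x
  have hcos : ∑ j, Real.cos (x j) = N * (ordR N x - 1) := by
    rw [ordR, Finset.sum_add_distrib]
    simp
    field_simp
    ring
  set u : Fin N → ℝ := fun i => -(h * (κ * ordR N x * Real.cos (x i))) with hu
  have habs : ∀ i, |u i| ≤ 2 * (h * κ) := fun i => by
    have h1 : |u i| = h * κ * (ordR N x * |Real.cos (x i)|) := by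
      rw [hu]
      simp only [abs_neg, abs_mul, abs_of_nonneg hh, abs_of_pos hκ, abs_of_nonneg hR0]
      ring
    have h2 : ordR N x * |Real.cos (x i)| ≤ 2 * 1 :=
      mul_le_mul hR2 (Real.abs_cos_le_one _) (abs_nonneg _) (by norm_num)
    rw [h1]
    nlinarith [mul_le_mul_of_nonneg_left h2 (mul_nonneg hh hκ.le)]
  have hhalf : ∀ i, |u i| ≤ 1 / 2 := fun i => (habs i).trans (by linarith)
  have hpos : ∀ i, 0 < 1 + u i := fun i => by linarith [(abs_le.1 (hhalf i)).1]
  -- the rank-one part can only increase the determinant of the diagonal part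
  have hdet : ∏ i, (1 + u i) ≤ (eulerJac N κ h x).det := by
    have e : eulerJac N κ h x = Matrix.diagonal (fun i => 1 + u i) *
        (1 + Matrix.replicateCol Unit (fun i => h * (κ / N) * Real.sin (x i) / (1 + u i)) *
          Matrix.replicateRow Unit (fun j => Real.sin (x j))) := by
      ext i j
      rw [Matrix.diagonal_mul]
      simp only [eulerJac, Matrix.of_apply, Matrix.add_apply, Matrix.mul_apply,
        Matrix.replicateCol_apply, Matrix.replicateRow_apply, Matrix.one_apply]
      have := (hpos i).ne'
      simp
      split_ifs <;> field_simp <;> simp [hu]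
      ring
    rw [e, Matrix.det_mul, Matrix.det_diagonal, Matrix.det_one_add_replicateCol_mul_replicateRow]
    refine le_mul_of_one_le_right (Finset.prod_nonneg fun i _ => (hpos i).le) ?_
    refine le_add_of_nonneg_right (Finset.sum_nonneg fun i _ => ?_)
    have h1 : 0 ≤ h * (κ / N) * (Real.sin (x i) * Real.sin (x i)) / (1 + u i) :=
      div_nonneg (mul_nonneg (by positivity) (mul_self_nonneg _)) (hpos i).le
    calc _ ≤ _ := h1
      _ = _ := by ring
  -- `log (1 + u) ≥ u / (1 + u) ≥ u - 2 u²` for `|u| ≤ 1 / 2`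
  have hexp : ∀ i, Real.exp (u i - 2 * u i ^ 2) ≤ 1 + u i := fun i => by
    rw [← Real.le_log_iff_exp_le (hpos i)]
    have h1 := Real.one_sub_inv_le_log_of_pos (hpos i)
    have h2 : u i - 2 * u i ^ 2 ≤ 1 - (1 + u i)⁻¹ := by
      have e : 1 - (1 + u i)⁻¹ - (u i - 2 * u i ^ 2)
          = u i ^ 2 * (1 + 2 * u i) * (1 + u i)⁻¹ := by
        have := (hpos i).ne'
        field_simp; ring
      have h3 : 0 ≤ u i ^ 2 * (1 + 2 * u i) * (1 + u i)⁻¹ :=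
        mul_nonneg (mul_nonneg (sq_nonneg _) (by linarith [(abs_le.1 (hhalf i)).1]))
          (inv_nonneg.2 (hpos i).le)
      linarith
    linarith
  have hsq : ∀ i, u i ^ 2 ≤ 4 * κ ^ 2 * h ^ 2 := fun i => by
    rw [← sq_abs]
    nlinarith [habs i, abs_nonneg (u i)]
  have hsum : h * (κ * N * δ) * ordR N x - 8 * N * κ ^ 2 * h ^ 2 ≤ ∑ i, (u i - 2 * u i ^ 2) := by
    have h1 : ∑ i, u i = h * κ * N * (ordR N x * (1 - ordR N x)) := by
      have : ∑ i, u i = -(h * (κ * ordR N x)) * ∑ j, Real.cos (x j) := by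
        rw [Finset.mul_sum]; exact Finset.sum_congr rfl fun i _ => by simp [hu]; ring
      rw [this, hcos]; ring
    have h2 : ∑ i, u i ^ 2 ≤ N * (4 * κ ^ 2 * h ^ 2) := by
      simpa using Finset.sum_le_sum fun i (_ : i ∈ Finset.univ) => hsq i
    rw [Finset.sum_sub_distrib, ← Finset.mul_sum, h1]
    have h3 : ordR N x * δ ≤ ordR N x * (1 - ordR N x) :=
      mul_le_mul_of_nonneg_left (by linarith) hR0
    have h4 := mul_le_mul_of_nonneg_left h3 (show 0 ≤ h * κ * N by positivity)
    nlinarith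
  calc _ ≤ ∑ i, (u i - 2 * u i ^ 2) + 1 := by linarith
    _ ≤ Real.exp (∑ i, (u i - 2 * u i ^ 2)) := Real.add_one_le_exp _
    _ = ∏ i, Real.exp (u i - 2 * u i ^ 2) := Real.exp_sum _ _
    _ ≤ ∏ i, (1 + u i) := Finset.prod_le_prod (fun i _ => (Real.exp_pos _).le) fun i _ => hexp i
    _ ≤ _ := hdet

/-! ### Volume and the lattice `(2πℤ)^N` -/

/-- If distances between `E`-images are at most `k` times distances between the corresponding
`Ψ`-images, then the volume of `E(S)` is at most `k^N` times that of `Ψ(S)`: the map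
`Ψ x ↦ E x` is well defined and `k`-Lipschitz. -/
lemma volume_image_le {N : ℕ} {S : Set (Fin N → ℝ)} {E Ψ : (Fin N → ℝ) → Fin N → ℝ} {k : NNReal}
    (h : ∀ x ∈ S, ∀ y ∈ S, dist (E x) (E y) ≤ k * dist (Ψ x) (Ψ y)) :
    volume (E '' S) ≤ (k : ENNReal) ^ N * volume (Ψ '' S) := by
  have hq : LipschitzOnWith k (E ∘ Function.invFunOn Ψ S) (Ψ '' S) := by
    refine LipschitzOnWith.of_dist_le_mul fun z hz w hw => ?_
    have := h _ (Function.invFunOn_mem hz) _ (Function.invFunOn_mem hw)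
    rwa [Function.invFunOn_eq hz, Function.invFunOn_eq hw] at this
  have hsub : E '' S ⊆ (E ∘ Function.invFunOn Ψ S) '' (Ψ '' S) := by
    rintro _ ⟨x, hx, rfl⟩
    have hz : Ψ x ∈ Ψ '' S := ⟨x, hx, rfl⟩
    refine ⟨Ψ x, hz, ?_⟩
    have := h _ (Function.invFunOn_mem hz) _ hx
    rw [Function.invFunOn_eq hz, dist_self, mul_zero] at this
    exact dist_le_zero.1 this
  have hH := hq.hausdorffMeasure_image_le (d := Fintype.card (Fin N)) (by positivity)
  rw [hausdorffMeasure_pi_real, ENNReal.rpow_natCast, Fintype.card_fin] at hH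
  exact (measure_mono hsub).trans hH

/-- A real basis of `ℝ^N` whose integer span consists of vectors in `(2πℤ)^N`. -/
lemma exists_lattice (N : ℕ) : ∃ b : Module.Basis (Fin N) ℝ (Fin N → ℝ),
    ∀ g ∈ Submodule.span ℤ (Set.range b), ∀ i, ∃ n : ℤ, g i = n * (2 * Real.pi) := by
  refine ⟨(Pi.basisFun ℝ (Fin N)).isUnitSMul (w := fun _ => 2 * Real.pi)
    fun _ => (ne_of_gt (by positivity)).isUnit, fun g hg => ?_⟩
  induction hg using Submodule.span_induction with
  | mem x hx =>
    obtain ⟨j, rfl⟩ := hx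
    intro i
    by_cases hij : i = j
    · exact ⟨1, by subst hij; simp [Module.Basis.isUnitSMul_apply]⟩
    · exact ⟨0, by simp [Module.Basis.isUnitSMul_apply, hij]⟩
  | zero => exact fun i => ⟨0, by simp⟩
  | add x y _ _ hx hy =>
    intro i
    obtain ⟨n, hn⟩ := hx i
    obtain ⟨m, hm⟩ := hy i
    exact ⟨n + m, by rw [Pi.add_apply, hn, hm]; push_cast; ring⟩
  | smul a x _ hx =>
    intro i
    obtain ⟨n, hn⟩ := hx i
    exact ⟨a * n, by rw [Pi.smul_apply, hn, zsmul_eq_mul]; push_cast; ring⟩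

instance vaddInvariantMeasure_span {N : ℕ} (b : Module.Basis (Fin N) ℝ (Fin N → ℝ)) :
    VAddInvariantMeasure (Submodule.span ℤ (Set.range b)) (Fin N → ℝ) volume :=
  ⟨fun c s _ => measure_preimage_add volume (c : Fin N → ℝ) s⟩

/-- A subset `T` of a lattice-periodic set `B` whose points are pairwise inequivalent modulo the
lattice has volume at most that of `B` in one fundamental cell. -/
lemma volume_le_of_inequivalent {N : ℕ} (b : Module.Basis (Fin N) ℝ (Fin N → ℝ))
    {B T : Set (Fin N → ℝ)}
    (hB : ∀ g ∈ Submodule.span ℤ (Set.range b), ∀ x ∈ B, x + g ∈ B)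
    (hTm : MeasurableSet T) (hTB : T ⊆ B)
    (hT : ∀ x ∈ T, ∀ y ∈ T, ∀ g ∈ Submodule.span ℤ (Set.range b), x + g = y → g = 0) :
    volume T ≤ volume (B ∩ ZSpan.fundamentalDomain b) := by
  have hs := ZSpan.isAddFundamentalDomain b (volume : Measure (Fin N → ℝ))
  have : Countable (Submodule.span ℤ (Set.range b)) := inferInstance
  rw [hs.measure_eq_tsum T, ← measure_iUnion₀]
  · refine measure_mono (Set.iUnion_subset fun g => ?_)
    rintro _ ⟨⟨x, hx, rfl⟩, hD⟩
    refine ⟨?_, hD⟩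
    have := hB g g.2 x (hTB hx)
    rwa [add_comm] at this
  · refine Pairwise.aedisjoint fun g₁ g₂ hne => ?_
    refine (Disjoint.inf_left _ ?_).inf_right _
    rw [Set.disjoint_left]
    rintro _ ⟨x, hx, rfl⟩ ⟨y, hy, hxy⟩
    have hxy' : (g₂ : Fin N → ℝ) + y = g₁ + x := hxy
    refine hne (Subtype.ext ?_)
    have := hT x hx y hy (g₁ - g₂) (sub_mem g₁.2 g₂.2) (by
      rw [add_sub, sub_eq_iff_eq_add, add_comm x, ← hxy', add_comm])
    exact sub_eq_zero.1 this
  · exact fun g => (hTm.nullMeasurableSet.vadd g).inter hs.nullMeasurableSet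

/-- The zero set of the order parameter is countable: there every phase is `π` modulo `2π`. -/
lemma volume_ordR_eq_zero {N : ℕ} (hN : N ≠ 0) : volume {x : Fin N → ℝ | ordR N x = 0} = 0 := by
  have : Nonempty (Fin N) := ⟨⟨0, Nat.pos_of_ne_zero hN⟩⟩
  have hna : NullSingletonClass (volume : Measure (Fin N → ℝ)) :=
    Measure.pi_nullSingletonClass (Classical.arbitrary (Fin N))
  refine measure_mono_null (t := Set.range fun (n : Fin N → ℤ) (i : Fin N) =>
    Real.pi + n i * (2 * Real.pi)) (fun x hx => ?_) ((Set.countable_range _).measure_zero _)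
  have hN' : ((N : ℝ)⁻¹) ≠ 0 := by positivity
  have h0 : ∑ j, (1 + Real.cos (x j)) = 0 := (mul_eq_zero.1 hx).resolve_left hN'
  rw [Finset.sum_eq_zero_iff_of_nonneg
    fun j _ => by linarith [Real.neg_one_le_cos (x j)]] at h0
  have h1 : ∀ i, ∃ n : ℤ, Real.pi + n * (2 * Real.pi) = x i := fun i =>
    Real.cos_eq_neg_one_iff.1 (by linarith [h0 i (Finset.mem_univ i)])
  choose n hn using h1
  exact ⟨n, funext hn⟩

/-! ### The time-`h` map on the closure of the exceptional set -/

/-- The set of initial data whose order parameter stays below `1 - δ`. -/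
def badSet (N : ℕ) (ω : Fin N → ℝ) (κ δ : ℝ) : Set (Fin N → ℝ) :=
  {θ0 | ∃ θ : Fin N → ℝ → ℝ, IsWinfreeSol N ω κ θ0 θ ∧
    ∀ t : ℝ, 0 ≤ t → orderParam N θ t < 1 - δ}

lemma mem_badSet_iff {N : ℕ} {ω : Fin N → ℝ} {κ δ : ℝ} {x : Fin N → ℝ} :
    x ∈ badSet N ω κ δ ↔ ∃ X : ℝ → Fin N → ℝ, X 0 = x ∧
      (∀ t, 0 ≤ t → HasDerivAt X (wField N ω κ (X t)) t) ∧
      ∀ t, 0 ≤ t → ordR N (X t) < 1 - δ := by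
  constructor
  · rintro ⟨θ, ⟨h0, h1⟩, h2⟩
    exact ⟨fun t i => θ i t, funext h0, fun t ht => hasDerivAt_pi.2 fun i => h1 i t ht, h2⟩
  · rintro ⟨X, h0, h1, h2⟩
    exact ⟨fun i t => X t i, ⟨fun i => congrFun h0 i,
      fun i t ht => hasDerivAt_pi.1 (h1 t ht) i⟩, h2⟩

lemma ordR_add_lattice {N : ℕ} {x g : Fin N → ℝ}
    (hg : ∀ i, ∃ n : ℤ, g i = n * (2 * Real.pi)) : ordR N (x + g) = ordR N x := by
  choose n hn using hg
  simp [ordR, hn, Real.cos_add_int_mul_two_pi]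

lemma wField_add_lattice {N : ℕ} {x g : Fin N → ℝ}
    (hg : ∀ i, ∃ n : ℤ, g i = n * (2 * Real.pi)) (ω : Fin N → ℝ) (κ : ℝ) :
    wField N ω κ (x + g) = wField N ω κ x := by
  choose n hn using hg
  ext i
  simp [wField, hn, Real.cos_add_int_mul_two_pi, Real.sin_add_int_mul_two_pi]

lemma hasDerivAt_add_lattice {N : ℕ} {ω : Fin N → ℝ} {κ : ℝ} {g : Fin N → ℝ}
    (hg : ∀ i, ∃ n : ℤ, g i = n * (2 * Real.pi)) {X : ℝ → Fin N → ℝ}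
    (hX : ∀ t, 0 ≤ t → HasDerivAt X (wField N ω κ (X t)) t) :
    ∀ t, 0 ≤ t → HasDerivAt (fun s => X s + g) (wField N ω κ (X t + g)) t := fun t ht => by
  rw [wField_add_lattice hg]
  exact (hX t ht).add_const g

lemma badSet_add_lattice {N : ℕ} {ω : Fin N → ℝ} {κ δ : ℝ} {x g : Fin N → ℝ}
    (hg : ∀ i, ∃ n : ℤ, g i = n * (2 * Real.pi)) (hx : x ∈ badSet N ω κ δ) :
    x + g ∈ badSet N ω κ δ := by
  rw [mem_badSet_iff] at hx ⊢
  obtain ⟨X, rfl, h1, h2⟩ := hx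
  exact ⟨fun t => X t + g, rfl, hasDerivAt_add_lattice hg h1,
    fun t ht => by rw [ordR_add_lattice hg]; exact h2 t ht⟩

/-- The time-`h` flow extends from the exceptional set to a continuous self-map `Ψ` of its closure
which commutes with the lattice and is Lipschitz-close to the Euler step. Closing the set up makes
it measurable, and no global flow is needed. -/
lemma exists_flow_map {N : ℕ} {ω : Fin N → ℝ} {κ δ C h : ℝ} (hC0 : 0 ≤ C)
    (hL : ∀ x y, ‖wField N ω κ x - wField N ω κ y‖ ≤ C * ‖x - y‖)
    (hC : ∀ X Y : ℝ → Fin N → ℝ, (∀ t, 0 ≤ t → HasDerivAt X (wField N ω κ (X t)) t) →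
        (∀ t, 0 ≤ t → HasDerivAt Y (wField N ω κ (Y t)) t) → ∀ h, 0 ≤ h → h ≤ 1 →
        ‖(X h - Y h) - (X 0 - Y 0) - h • (wField N ω κ (X 0) - wField N ω κ (Y 0))‖
          ≤ C * h ^ 2 * ‖X 0 - Y 0‖)
    (h0 : 0 ≤ h) (h1 : h ≤ 1) :
    ∃ Ψ : (Fin N → ℝ) → Fin N → ℝ, Continuous Ψ ∧
      Set.MapsTo Ψ (closure (badSet N ω κ δ)) (closure (badSet N ω κ δ)) ∧
      (∀ g : Fin N → ℝ, (∀ i, ∃ n : ℤ, g i = n * (2 * Real.pi)) →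
        ∀ x ∈ closure (badSet N ω κ δ), Ψ (x + g) = Ψ x + g) ∧
      ∀ x y, ‖(Ψ x - Ψ y) - ((x + h • wField N ω κ x) - (y + h • wField N ω κ y))‖
        ≤ C * h ^ 2 * ‖x - y‖ := by
  have hA : ∀ x ∈ badSet N ω κ δ, ∃ X : ℝ → Fin N → ℝ, X 0 = x ∧
      (∀ t, 0 ≤ t → HasDerivAt X (wField N ω κ (X t)) t) ∧
      ∀ t, 0 ≤ t → ordR N (X t) < 1 - δ := fun x hx => mem_badSet_iff.1 hx
  choose! X hX0 hX hXR using hA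
  have hch : 0 ≤ C * h ^ 2 := by positivity
  have hlip : LipschitzOnWith (C * h ^ 2).toNNReal
      (fun x => X x h - (x + h • wField N ω κ x)) (badSet N ω κ δ) := by
    refine LipschitzOnWith.of_dist_le_mul fun x hx y hy => ?_
    have := hC (X x) (X y) (hX x hx) (hX y hy) h h0 h1
    rw [hX0 x hx, hX0 y hy] at this
    rw [Real.coe_toNNReal _ hch, dist_eq_norm, dist_eq_norm]
    refine le_of_eq_of_le (congrArg norm ?_) this
    module
  obtain ⟨G, hG, hGeq⟩ := hlip.extend_pi
  have hF : Continuous (wField N ω κ) := by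
    refine LipschitzWith.continuous (K := C.toNNReal) (LipschitzWith.of_dist_le_mul fun x y => ?_)
    rw [Real.coe_toNNReal _ hC0, dist_eq_norm, dist_eq_norm]
    exact hL x y
  have hΨ : Continuous fun x => x + h • wField N ω κ x + G x :=
    (continuous_id.add (hF.const_smul h)).add hG.continuous
  have hval : ∀ x ∈ badSet N ω κ δ, x + h • wField N ω κ x + G x = X x h := fun x hx => by
    rw [← hGeq hx]; module
  refine ⟨fun x => x + h • wField N ω κ x + G x, hΨ, ?_, ?_, ?_⟩
  · refine Set.MapsTo.closure (fun x hx => ?_) hΨ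
    rw [hval x hx, mem_badSet_iff]
    refine ⟨fun t => X x (t + h), by simp, fun t ht => ?_, fun t ht => hXR x hx _ (by linarith)⟩
    exact (hX x hx (t + h) (by linarith)).comp_add_const t h
  · intro g hg
    refine Set.EqOn.closure (f := fun x => x + g + h • wField N ω κ (x + g) + G (x + g))
      (g := fun x => x + h • wField N ω κ x + G x + g) (fun x hx => ?_)
      (hΨ.comp (continuous_id.add continuous_const)) (hΨ.add continuous_const)
    have hxg := badSet_add_lattice hg hx
    have := hC (X (x + g)) (fun s => X x s + g) (hX _ hxg) (hasDerivAt_add_lattice hg (hX x hx))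
      h h0 h1
    rw [hX0 _ hxg, hX0 x hx] at this
    simp only [sub_self, norm_zero, mul_zero, smul_zero, sub_zero, norm_le_zero_iff] at this
    change x + g + h • wField N ω κ (x + g) + G (x + g) = x + h • wField N ω κ x + G x + g
    rw [hval _ hxg, hval x hx]
    exact sub_eq_zero.1 this
  · intro x y
    have := hG.dist_le_mul x y
    rw [Real.coe_toNNReal _ hch, dist_eq_norm, dist_eq_norm] at this
    refine le_of_eq_of_le (congrArg norm ?_) this
    module

/-- One time step does not increase volume modulo the lattice, whereas to first order in `h` the
Euler step expands it at a rate at least `κ N δ R`. -/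
lemma integral_ordR_le {N : ℕ} (hN : N ≠ 0) {ω : Fin N → ℝ} {κ δ : ℝ} (hκ : 0 < κ) (hδ : 0 < δ)
    (b : Module.Basis (Fin N) ℝ (Fin N → ℝ))
    (hb : ∀ g ∈ Submodule.span ℤ (Set.range b), ∀ i, ∃ n : ℤ, g i = n * (2 * Real.pi)) :
    ∃ K M : ℝ, 1 ≤ K ∧ ∀ h, 0 < h → h * K ≤ 1 →
      κ * N * δ * ∫ x in closure (badSet N ω κ δ) ∩ ZSpan.fundamentalDomain b, ordR N x
        ≤ M * h := by
  obtain ⟨C, hC0, hL, hC⟩ := exists_euler_bound N ω κ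
  set B := closure (badSet N ω κ δ) with hBdef
  set S := B ∩ ZSpan.fundamentalDomain b with hS
  have hSm : MeasurableSet S :=
    isClosed_closure.measurableSet.inter (ZSpan.fundamentalDomain_measurableSet b)
  have hSfin : volume S < ⊤ :=
    ((ZSpan.fundamentalDomain_isBounded b).subset Set.inter_subset_right).measure_lt_top
  have hBR : ∀ x ∈ B, ordR N x ≤ 1 - δ := by
    refine closure_minimal (fun x hx => ?_) (isClosed_le (continuous_ordR N) continuous_const)
    obtain ⟨X, rfl, -, h2⟩ := mem_badSet_iff.1 hx
    exact (h2 0 le_rfl).le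
  have hBg : ∀ g ∈ Submodule.span ℤ (Set.range b), ∀ x ∈ B, x + g ∈ B := fun g hg =>
    Set.MapsTo.closure (f := fun x => x + g) (fun x hx => badSet_add_lattice (hb g hg) hx)
      (by fun_prop)
  set v := (volume S).toReal with hv
  refine ⟨1 + 4 * C + 4 * κ + 8 * N * κ ^ 2 + 2 * N * C, (8 * N * κ ^ 2 + 4 * N * C) * v, ?_, ?_⟩
  · have : 0 ≤ 4 * C + 4 * κ + 8 * N * κ ^ 2 + 2 * N * C := by positivity
    linarith
  intro h h0 hK
  have p1 : 0 ≤ h * C := by positivity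
  have p2 : 0 ≤ h * κ := by positivity
  have p3 : 0 ≤ h * (8 * N * κ ^ 2) := by positivity
  have p4 : 0 ≤ h * (2 * N * C) := by positivity
  have h1 : h ≤ 1 := by nlinarith
  have q1 : h * C ≤ 1 / 4 := by nlinarith
  have q2 : 4 * (h * κ) ≤ 1 := by nlinarith
  have q3 : h * (8 * N * κ ^ 2) ≤ 1 := by nlinarith
  have q4 : h * (2 * N * C) ≤ 1 := by nlinarith
  have r1 : C * h ^ 2 ≤ 1 / 4 := by nlinarith
  have r3 : 8 * N * κ ^ 2 * h ^ 2 ≤ 1 := by nlinarith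
  have r4 : N * (2 * C * h ^ 2) ≤ 1 := by nlinarith
  have hk0 : 0 ≤ 2 * C * h ^ 2 := by positivity
  obtain ⟨Ψ, hΨc, hΨB, hΨg, hΨ⟩ := exists_flow_map (δ := δ) hC0 hL hC h0.le h1
  set E : (Fin N → ℝ) → Fin N → ℝ := fun x => x + h • wField N ω κ x with hE
  -- both `E` and `Ψ` are injective, with a quantitative lower bound
  have hElow : ∀ x y, 3 / 4 * ‖x - y‖ ≤ ‖E x - E y‖ := fun x y => by
    have e : x - y = (E x - E y) - h • (wField N ω κ x - wField N ω κ y) := by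
      simp only [hE]; module
    have h2 : ‖h • (wField N ω κ x - wField N ω κ y)‖ ≤ 1 / 4 * ‖x - y‖ := by
      rw [norm_smul, Real.norm_of_nonneg h0.le]
      nlinarith [mul_le_mul_of_nonneg_left (hL x y) h0.le, norm_nonneg (x - y)]
    have h3 := norm_sub_le (E x - E y) (h • (wField N ω κ x - wField N ω κ y))
    rw [← e] at h3
    linarith
  have hΨ' : ∀ x y, ‖E x - E y‖ ≤ ‖Ψ x - Ψ y‖ + C * h ^ 2 * ‖x - y‖ := fun x y => by
    have h3 := norm_sub_le (Ψ x - Ψ y) ((Ψ x - Ψ y) - (E x - E y))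
    rw [sub_sub_cancel] at h3
    linarith [hΨ x y]
  have hΨlow : ∀ x y, ‖x - y‖ ≤ 2 * ‖Ψ x - Ψ y‖ := fun x y => by
    nlinarith [hΨ' x y, hElow x y, mul_le_mul_of_nonneg_right r1 (norm_nonneg (x - y))]
  have hΨinj : Function.Injective Ψ := fun x y hxy => by
    have := hΨlow x y
    rw [hxy, sub_self, norm_zero, mul_zero] at this
    exact sub_eq_zero.1 (norm_le_zero_iff.1 this)
  have hEinj : Function.Injective E := fun x y hxy => by
    have := hElow x y
    rw [hxy, sub_self, norm_zero] at this
    exact sub_eq_zero.1 (norm_le_zero_iff.1 (by linarith))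
  have hvol1 : volume (Ψ '' S) ≤ volume S := by
    refine volume_le_of_inequivalent b hBg
      (hSm.image_of_continuousOn_injOn hΨc.continuousOn hΨinj.injOn)
      ((Set.image_mono Set.inter_subset_left).trans hΨB.image_subset) ?_
    rintro _ ⟨x, hx, rfl⟩ _ ⟨y, hy, rfl⟩ g hg hxy
    rw [← hΨg g (hb g hg) x hx.1] at hxy
    have hxy' := hΨinj hxy
    have hu := ZSpan.exist_unique_vadd_mem_fundamentalDomain b x
    have e := hu.unique (y₁ := (0 : Submodule.span ℤ (Set.range b))) (y₂ := ⟨g, hg⟩)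
      (by simpa using hx.2) (by
        change g + x ∈ _
        rw [add_comm, hxy']; exact hy.2)
    exact (congrArg Subtype.val e).symm
  have hvol2 : volume (E '' S) ≤ ((1 + 2 * C * h ^ 2).toNNReal : ENNReal) ^ N * volume S := by
    refine (volume_image_le (Ψ := Ψ) fun x _ y _ => ?_).trans (by gcongr)
    rw [Real.coe_toNNReal _ (by linarith), dist_eq_norm, dist_eq_norm]
    have := mul_le_mul_of_nonneg_left (hΨlow x y) (show 0 ≤ C * h ^ 2 by positivity)
    linarith [hΨ' x y]
  rw [← lintegral_abs_det_fderiv_eq_addHaar_image volume hSm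
    (fun x _ => (hasFDerivAt_euler N ω κ h x).hasFDerivWithinAt) hEinj.injOn] at hvol2
  have : IsFiniteMeasure (volume.restrict S) := ⟨by simpa using hSfin⟩
  have hRint : Integrable (ordR N) (volume.restrict S) :=
    Integrable.of_bound (continuous_ordR N).aestronglyMeasurable 2 (Eventually.of_forall fun x => by
      rw [Real.norm_of_nonneg (ordR_nonneg x)]; exact ordR_le_two hN x)
  set f : (Fin N → ℝ) → ℝ := fun x =>
    (1 - 8 * N * κ ^ 2 * h ^ 2) + h * (κ * N * δ) * ordR N x with hf
  have hf0 : ∀ x, 0 ≤ f x := fun x =>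
    add_nonneg (by linarith) (mul_nonneg (by positivity) (ordR_nonneg x))
  have hfint : Integrable f (volume.restrict S) := (integrable_const _).add (hRint.const_mul _)
  have hle : ENNReal.ofReal (∫ x in S, f x) ≤
      ((1 + 2 * C * h ^ 2).toNNReal : ENNReal) ^ N * volume S := by
    rw [ofReal_integral_eq_lintegral_ofReal hfint (Eventually.of_forall hf0)]
    refine le_trans (setLIntegral_mono' hSm fun x hx => ?_) hvol2
    refine ENNReal.ofReal_le_ofReal (le_trans ?_ (le_abs_self _))
    rw [ContinuousLinearMap.det, LinearMap.coe_toContinuousLinearMap, LinearMap.det_toLin']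
    have := le_det_eulerJac hN hκ h0.le q2 (hBR x hx.1)
    simp only [hf]
    linarith
  have hle' : ∫ x in S, f x ≤ (1 + 2 * C * h ^ 2) ^ N * v := by
    have := ENNReal.toReal_mono (by finiteness) hle
    rw [ENNReal.toReal_ofReal (integral_nonneg hf0), ENNReal.toReal_mul, ENNReal.toReal_pow,
      ENNReal.coe_toReal, Real.coe_toNNReal _ (by linarith)] at this
    exact this
  have hfval : ∫ x in S, f x = (1 - 8 * N * κ ^ 2 * h ^ 2) * v +
      h * (κ * N * δ) * ∫ x in S, ordR N x := by
    rw [integral_add (integrable_const _) (hRint.const_mul _), integral_const_mul, integral_const]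
    simp [hv, Measure.real, mul_comm]
  have hpow : (1 + 2 * C * h ^ 2) ^ N ≤ 1 + 2 * (N * (2 * C * h ^ 2)) := by
    have e1 : (1 + 2 * C * h ^ 2) ^ N ≤ Real.exp (N * (2 * C * h ^ 2)) := by
      rw [Real.exp_nat_mul]
      exact pow_le_pow_left₀ (by linarith) (by linarith [Real.add_one_le_exp (2 * C * h ^ 2)]) N
    have hn0 : 0 ≤ N * (2 * C * h ^ 2) := by positivity
    have e2 := Real.abs_exp_sub_one_le (x := N * (2 * C * h ^ 2)) (by rwa [abs_of_nonneg hn0])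
    rw [abs_of_nonneg hn0] at e2
    linarith [le_abs_self (Real.exp (N * (2 * C * h ^ 2)) - 1)]
  have hv0 : 0 ≤ v := ENNReal.toReal_nonneg
  have hfin := mul_le_mul_of_nonneg_right hpow hv0
  refine le_of_mul_le_mul_left ?_ h0
  nlinarith

/-! ### Conclusion -/

theorem stmt17 (N : ℕ) (hN : 2 ≤ N) (ω : Fin N → ℝ) (κ δ : ℝ)
    (hκ : 0 < κ) (hδ : δ ∈ Set.Ioo (0:ℝ) 1) :
    volume {θ0 : Fin N → ℝ | ∃ θ : Fin N → ℝ → ℝ, IsWinfreeSol N ω κ θ0 θ ∧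
      ∀ t : ℝ, 0 ≤ t → orderParam N θ t < 1 - δ} = 0 := by
  have hN0 : N ≠ 0 := by omega
  obtain ⟨b, hb⟩ := exists_lattice N
  obtain ⟨K, M, hK, hM⟩ := integral_ordR_le (ω := ω) hN0 hκ hδ.1 b hb
  set B := closure (badSet N ω κ δ) with hBdef
  set S := B ∩ ZSpan.fundamentalDomain b with hS
  have hSfin : volume S < ⊤ :=
    ((ZSpan.fundamentalDomain_isBounded b).subset Set.inter_subset_right).measure_lt_top
  have : IsFiniteMeasure (volume.restrict S) := ⟨by simpa using hSfin⟩
  have hRint : Integrable (ordR N) (volume.restrict S) :=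
    Integrable.of_bound (continuous_ordR N).aestronglyMeasurable 2 (Eventually.of_forall fun x => by
      rw [Real.norm_of_nonneg (ordR_nonneg x)]; exact ordR_le_two hN0 x)
  have hc : 0 < κ * N * δ := mul_pos (mul_pos hκ (by positivity)) hδ.1
  have hI : κ * N * δ * ∫ x in S, ordR N x ≤ 0 := by
    have hlim : Tendsto (fun h : ℝ => M * h) (nhdsWithin 0 (Set.Ioi 0)) (nhds 0) := by
      have : Tendsto (fun h : ℝ => M * h) (nhds 0) (nhds (M * 0)) :=
        (continuous_const.mul continuous_id).tendsto 0
      rw [mul_zero] at this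
      exact this.mono_left nhdsWithin_le_nhds
    refine ge_of_tendsto hlim ?_
    filter_upwards [Ioc_mem_nhdsGT (show (0:ℝ) < K⁻¹ by positivity)] with h hh
    refine hM h hh.1 ?_
    rw [← le_div_iff₀ (by linarith), one_div]
    exact hh.2
  have hI0 : ∫ x in S, ordR N x = 0 :=
    le_antisymm (nonpos_of_mul_nonpos_right hI hc) (integral_nonneg fun x => ordR_nonneg x)
  have hae : ∀ᵐ x ∂(volume.restrict S), ordR N x = 0 :=
    (integral_eq_zero_iff_of_nonneg (fun x => ordR_nonneg x) hRint).1 hI0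
  have hS0 : volume S = 0 := by
    have h1 : ∀ᵐ x ∂(volume.restrict S), ordR N x ≠ 0 := ae_restrict_of_ae (by
      rw [ae_iff]
      simpa using volume_ordR_eq_zero hN0)
    have h2 : ∀ᵐ x ∂(volume.restrict S), False := by
      filter_upwards [hae, h1] with x hx hx'
      exact hx' hx
    simpa using h2
  have hBg : ∀ g ∈ Submodule.span ℤ (Set.range b), ∀ x ∈ B, g + x ∈ B := fun g hg =>
    Set.MapsTo.closure (f := fun x => g + x)
      (fun x hx => by
        change g + x ∈ _
        rw [add_comm]; exact badSet_add_lattice (hb g hg) hx) (by fun_prop)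
  have hB0 : volume B = 0 := by
    refine (ZSpan.isAddFundamentalDomain b volume).measure_zero_of_invariant B (fun g => ?_) hS0
    refine Set.Subset.antisymm ?_ fun x hx => ⟨-(g : Fin N → ℝ) + x, hBg _ (neg_mem g.2) x hx, ?_⟩
    · rintro _ ⟨x, hx, rfl⟩
      exact hBg g g.2 x hx
    · exact add_neg_cancel_left _ _
  exact measure_mono_null subset_closure hB0
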